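/- Fix a type ℓ. Let (b, τ, ρ) ∈ Γ^ℓ be a parameter vector such that the self-similar IFS generated by F^{(b,τ,ρ)} has no exact overlapping. Then the map (b̂, τ̂, ρ̂) ↦ s_{(b̂,τ̂,ρ̂)} assigning to each parameter vector in Γ^ℓ the natural dimension of the corresponding CPLIFS is continuous at (b, τ, ρ). -/

import Mathlib

open Set Filter MeasureTheory

noncomputable section

/-- Composition `f_{i₁} ∘ ⋯ ∘ f_{iₙ}` of a family of maps of `ℝ` along a finite word
(the empty composition being the identity). -/
def compFam {ι : Type*} (S : ι → ℝ → ℝ) (w : List ι) : ℝ → ℝ :=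
  w.foldr (fun k g => S k ∘ g) id

/-- A family of maps of `ℝ` has *no exact overlapping* if for every `n ≥ 1` and all words
`ī, j̄` of length `n`, equality of the compositions `S_ī = S_j̄` (as functions) implies
`ī = j̄`. -/
def NoExactOverlap {ι : Type*} (S : ι → ℝ → ℝ) : Prop :=
  ∀ n : ℕ, 1 ≤ n → ∀ i j : Fin n → ι,
    compFam S (List.ofFn i) = compFam S (List.ofFn j) → i = j

/-- The supporting interval `I` of the system `{f_1, …, f_m}`:  if the maps have a common
fixed point `φ` (i.e. the attractor is the single point `φ`) it is `[φ - 1/2, φ + 1/2]`;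
otherwise it is the smallest nonempty compact interval sent into itself by all the maps,
i.e. the intersection of all such intervals. -/
def suppInt {m : ℕ} (f : Fin m → ℝ → ℝ) : Set ℝ :=
  haveI := Classical.propDecidable (∃ φ : ℝ, ∀ k, f k φ = φ)
  if h : ∃ φ : ℝ, ∀ k, f k φ = φ then
    Set.Icc (h.choose - 1 / 2) (h.choose + 1 / 2)
  else
    ⋂₀ {J : Set ℝ | J.Nonempty ∧ (∃ a b : ℝ, J = Set.Icc a b) ∧ ∀ k, f k '' J ⊆ J}

/-- The natural pressure function
`Φ(s) = limsup_{n → ∞} (1/n) log ∑_{(i₁,…,iₙ)} |I_{i₁…iₙ}|ˢ`. -/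
def pressure {m : ℕ} (f : Fin m → ℝ → ℝ) (s : ℝ) : ℝ :=
  Filter.limsup
    (fun n : ℕ =>
      (n : ℝ)⁻¹ * Real.log (∑ w : Fin n → Fin m,
        Metric.diam (compFam f (List.ofFn w) '' suppInt f) ^ s))
    Filter.atTop

/-- The index of the interval of linearity (determined by the breaking points `b`) in which
the point `u` lies: the number of breaking points lying below `u`. -/
def slopeIdx {lk : ℕ} (b : Fin lk → ℝ) (u : ℝ) : Fin (lk + 1) :=
  ⟨(Finset.univ.filter fun j : Fin lk => b j < u).card,
   Nat.lt_succ_of_le (le_trans (Finset.card_filter_le _ _) (by simp))⟩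

/-- The continuous piecewise linear function with breaking points `b`, slope `ρ i` on the
`i`-th interval of linearity, and value `τ` at `0`:  `x ↦ τ + ∫_0^x (slope at u) du`. -/
def plFun {lk : ℕ} (b : Fin lk → ℝ) (ρ : Fin (lk + 1) → ℝ) (τ : ℝ) (x : ℝ) : ℝ :=
  τ + ∫ u in (0 : ℝ)..x, ρ (slopeIdx b u)

variable (m : ℕ) (l : Fin m → ℕ)

/-- The space `ℝ^L` of breaking point data of type `ℓ`. -/
abbrev BSpace := (k : Fin m) → Fin (l k) → ℝ

/-- The space `ℝ^{L+m}` of slope data of type `ℓ`. -/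
abbrev RSpace := (k : Fin m) → Fin (l k + 1) → ℝ

/-- The full parameter space `ℝ^L × ℝ^m × ℝ^{L+m}` of CPLIFSs of type `ℓ`:
breaking points, vertical translations and slopes. -/
abbrev Param := BSpace m l × (Fin m → ℝ) × RSpace m l

/-- The family of piecewise linear maps `{f_1, …, f_m}` determined by a parameter
vector `(b, τ, ρ)`. -/
def paramFun (p : Param m l) : Fin m → ℝ → ℝ :=
  fun k => plFun (p.1 k) (p.2.2 k) (p.2.1 k)

/-- The set `Γ^ℓ` of admissible parameter vectors: breaking points strictly increasing,
slopes nonzero of modulus `< 1`, and consecutive slopes of each map distinct. -/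
def Gamma : Set (Param m l) :=
  {p | (∀ k, StrictMono (p.1 k)) ∧
       (∀ k i, p.2.2 k i ≠ 0 ∧ |p.2.2 k i| < 1) ∧
       (∀ k (i : Fin (l k)), p.2.2 k i.castSucc ≠ p.2.2 k i.succ)}

/-- The natural dimension of the CPLIFS with parameter vector `p`: the (unique) nonnegative
zero of the natural pressure function, i.e. `inf {s ≥ 0 | Φ_p(s) ≤ 0}`. -/
def natDim (p : Param m l) : ℝ :=
  sInf {s : ℝ | 0 ≤ s ∧ pressure (paramFun m l p) s ≤ 0}

/-!
The slope of a cylinder map along an orbit only changes when the orbit meets a breaking point, so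
under a small perturbation of the parameters the logarithm of a cylinder length can only change
substantially at the times when the orbit passes close to a breaking point. If a composition of the
maps fixed a breaking point, both affine branches adjacent to it would give compositions with a
common fixed point; such affine maps commute, which is an exact overlap. Without exact overlaps no
breaking point returns to itself, near returns therefore take a long time, and for nearby
parameters the logarithms of the lengths of the cylinders of level `n` differ by at most
`A + ε * n`. Hence the pressures converge pointwise, and since they are strictly decreasing so do
their zeros.
-/

section

open scoped NNReal Topology

variable {m l}

section PiecewiseLinear

variable {n : ℕ} {b : Fin n → ℝ} {ρ : Fin (n + 1) → ℝ} {τ : ℝ}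

/-- The image under `f` of every compact interval has diameter at least `c` times the length of the
interval; a lower counterpart, for intervals, of the Lipschitz condition. -/
def IntervalLowerBound (c : ℝ) (f : ℝ → ℝ) : Prop :=
  ∀ ⦃x y : ℝ⦄, x ≤ y → c * (y - x) ≤ Metric.diam (f '' Icc x y)

theorem slopeIdx_congr {b b' : Fin n → ℝ} {u u' : ℝ} (h : ∀ j, b j < u ↔ b' j < u') :
    slopeIdx b u = slopeIdx b' u' := by
  simp only [slopeIdx, h]

theorem val_slopeIdx (b : Fin n → ℝ) (u : ℝ) :
    (slopeIdx b u : ℕ) = (Finset.univ.filter fun j => b j < u).card := rfl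

theorem monotone_slopeIdx (b : Fin n → ℝ) : Monotone (slopeIdx b) := fun u v huv => by
  rw [Fin.le_def, val_slopeIdx, val_slopeIdx]
  exact Finset.card_le_card (Finset.monotone_filter_right _ fun _ _ hj => hj.trans_le huv)

theorem measurable_slopeIdx (b : Fin n → ℝ) : Measurable (slopeIdx b) :=
  measurable_to_countable' fun _ =>
    (ordConnected_singleton.preimage_mono (monotone_slopeIdx b)).measurableSet

theorem slopeIdx_lt_iff (hb : Monotone b) {u : ℝ} {j : Fin n} :
    b j < u ↔ (j : ℕ) < slopeIdx b u := by
  constructor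
  · intro hj
    have hsub : Finset.Iic j ⊆ Finset.univ.filter fun i => b i < u := fun i hi =>
      Finset.mem_filter.2 ⟨Finset.mem_univ i, (hb (Finset.mem_Iic.1 hi)).trans_lt hj⟩
    simpa only [Fin.card_Iic, Nat.succ_le_iff, val_slopeIdx] using Finset.card_le_card hsub
  · contrapose!
    intro hj
    have hsub : (Finset.univ.filter fun i => b i < u) ⊆ Finset.Iio j := fun i hi =>
      Finset.mem_Iio.2 (hb.reflect_lt ((Finset.mem_filter.1 hi).2.trans_le hj))
    simpa only [Fin.card_Iio, val_slopeIdx] using Finset.card_le_card hsub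

theorem measurable_slope (b : Fin n → ℝ) (ρ : Fin (n + 1) → ℝ) :
    Measurable fun u => ρ (slopeIdx b u) :=
  (measurable_of_finite ρ).comp (measurable_slopeIdx b)

theorem intervalIntegrable_slope (b : Fin n → ℝ) (ρ : Fin (n + 1) → ℝ) (x y : ℝ) :
    IntervalIntegrable (fun u => ρ (slopeIdx b u)) volume x y :=
  (intervalIntegrable_const (c := ‖ρ‖)).mono_fun'
    (measurable_slope b ρ).aestronglyMeasurable
    (Eventually.of_forall fun _ => norm_le_pi_norm ρ _)

theorem plFun_sub (b : Fin n → ℝ) (ρ : Fin (n + 1) → ℝ) (τ x y : ℝ) :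
    plFun b ρ τ y - plFun b ρ τ x = ∫ u in x..y, ρ (slopeIdx b u) := by
  rw [← intervalIntegral.integral_interval_sub_left (intervalIntegrable_slope b ρ 0 y)
    (intervalIntegrable_slope b ρ 0 x)]
  exact add_sub_add_left_eq_sub _ _ _

theorem plFun_zero (b : Fin n → ℝ) (ρ : Fin (n + 1) → ℝ) (τ : ℝ) : plFun b ρ τ 0 = τ := by
  simp only [plFun, intervalIntegral.integral_same, add_zero]

theorem lipschitzWith_plFun {K : ℝ≥0} (hρ : ∀ i, |ρ i| ≤ K) (b : Fin n → ℝ) (τ : ℝ) :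
    LipschitzWith K (plFun b ρ τ) :=
  LipschitzWith.of_dist_le_mul fun y x => by
    rw [Real.dist_eq, Real.dist_eq, plFun_sub]
    exact intervalIntegral.norm_integral_le_of_norm_le_const
      (f := fun u => ρ (slopeIdx b u)) fun u _ => hρ (slopeIdx b u)

theorem continuous_plFun (b : Fin n → ℝ) (ρ : Fin (n + 1) → ℝ) (τ : ℝ) :
    Continuous (plFun b ρ τ) :=
  (lipschitzWith_plFun (K := ‖ρ‖₊) (norm_le_pi_norm ρ) b τ).continuous

theorem plFun_sub_of_slopeIdx_eq {i : Fin (n + 1)} {x y : ℝ} (hxy : x ≤ y)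
    (hi : ∀ u ∈ Ioc x y, slopeIdx b u = i) :
    plFun b ρ τ y - plFun b ρ τ x = ρ i * (y - x) := by
  have hconst : ∫ u in x..y, ρ (slopeIdx b u) = ∫ _ in x..y, ρ i :=
    intervalIntegral.integral_congr_ae <| Eventually.of_forall fun u hu => by
      rw [hi u (uIoc_of_le hxy ▸ hu)]
  rw [plFun_sub, hconst, intervalIntegral.integral_const, smul_eq_mul, mul_comm]

open scoped Pointwise in
theorem diam_plFun_image_Icc {i : Fin (n + 1)} {x y : ℝ} (hxy : x ≤ y)
    (hi : ∀ u ∈ Icc x y, slopeIdx b u = i) :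
    Metric.diam (plFun b ρ τ '' Icc x y) = |ρ i| * (y - x) := by
  have himage : plFun b ρ τ '' Icc x y = (fun z => z + (plFun b ρ τ x - ρ i * x)) ''
      (ρ i • Icc x y) := by
    rw [← image_smul, image_image]
    refine image_congr fun u hu => ?_
    have := plFun_sub_of_slopeIdx_eq (ρ := ρ) (τ := τ) hu.1 fun v hv =>
      hi v ⟨hv.1.le, hv.2.trans hu.2⟩
    rw [smul_eq_mul]
    linarith
  rw [himage, (isometry_add_right _).diam_image, diam_smul₀, Real.diam_Icc hxy, Real.norm_eq_abs]

theorem exists_subinterval_disjoint_range {ι : Type*} [Fintype ι] (b : ι → ℝ) {x y : ℝ}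
    (hxy : x ≤ y) :
    ∃ x' y', x ≤ x' ∧ x' ≤ y' ∧ y' ≤ y ∧ y' - x' = (y - x) / (Fintype.card ι + 1) ∧
      ∀ j, b j ∉ Ico x' y' := by
  set N : ℝ := Fintype.card ι + 1 with hN
  set e : ℝ := (y - x) / N
  have hN0 : 0 < N := by positivity
  have he0 : 0 ≤ e := div_nonneg (sub_nonneg.2 hxy) hN0.le
  have hsum : N * e = y - x := mul_div_cancel₀ _ hN0.ne'
  obtain ⟨i, hi⟩ : ∃ i : Fin (Fintype.card ι + 1),
      ∀ j, b j ∉ Ico (x + i * e) (x + (i + 1) * e) := by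
    by_contra! hall
    choose g hg using hall
    obtain ⟨i, i', hne, heq⟩ := Fintype.exists_ne_map_eq_of_card_lt g (by simp)
    wlog hlt : i < i' generalizing i i'
    · exact this i' i hne.symm heq.symm (hne.lt_or_gt.resolve_left hlt)
    have hstep : (i : ℝ) + 1 ≤ i' := by exact_mod_cast hlt
    have hle : (i + 1 : ℝ) * e ≤ i' * e := by gcongr
    have h₁ := (hg i).2
    have h₂ := (hg i').1
    rw [heq] at h₁
    linarith
  have hi1 : (i + 1 : ℝ) * e ≤ N * e := by
    gcongr
    rw [hN]
    exact_mod_cast i.isLt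
  have hi0 : 0 ≤ (i : ℝ) * e := by positivity
  exact ⟨x + i * e, x + (i + 1) * e, by linarith, by linarith, by linarith, by ring, hi⟩

theorem intervalLowerBound_plFun {r : ℝ} (hρ : ∀ i, r ≤ |ρ i|) (b : Fin n → ℝ) (τ : ℝ) :
    IntervalLowerBound (r / (n + 1)) (plFun b ρ τ) := by
  intro x y hxy
  obtain ⟨x', y', hx, hxy', hy, hlen, hb⟩ := exists_subinterval_disjoint_range b hxy
  rw [Fintype.card_fin] at hlen
  have hidx : ∀ u ∈ Ioc x' y', slopeIdx b u = slopeIdx b y' := fun u hu =>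
    slopeIdx_congr fun j => ⟨fun h => h.trans_le hu.2, fun h =>
      (not_le.1 fun h' => hb j ⟨h', h⟩).trans hu.1⟩
  calc r / (n + 1) * (y - x) = r * (y' - x') := by rw [hlen]; ring
    _ ≤ |ρ (slopeIdx b y')| * (y' - x') := by gcongr; exact hρ _
    _ = dist (plFun b ρ τ y') (plFun b ρ τ x') := by
      rw [Real.dist_eq, plFun_sub_of_slopeIdx_eq hxy' hidx, abs_mul,
        abs_of_nonneg (sub_nonneg.2 hxy')]
    _ ≤ Metric.diam (plFun b ρ τ '' Icc x y) :=
      Metric.dist_le_diam_of_mem (isCompact_Icc.image (continuous_plFun b ρ τ)).isBounded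
        (mem_image_of_mem _ ⟨hx.trans hxy', hy⟩) (mem_image_of_mem _ ⟨hx, hxy'.trans hy⟩)

theorem eventually_slopeIdx_eq {u : ℝ} (hu : ∀ j, b j ≠ u) :
    ∀ᶠ b' in 𝓝 b, slopeIdx b' u = slopeIdx b u := by
  have hsides : ∀ j, ∀ᶠ b' in 𝓝 b, (b' j < u ↔ b j < u) := fun j => by
    have hcont : ContinuousAt (fun b' : Fin n → ℝ => b' j) b := continuousAt_apply j b
    rcases lt_or_gt_of_ne (hu j) with h | h
    · filter_upwards [hcont.eventually_lt continuousAt_const h] with b' hb'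
      exact iff_of_true hb' h
    · filter_upwards [continuousAt_const.eventually_lt hcont h] with b' hb'
      exact iff_of_false hb'.not_gt h.not_gt
  filter_upwards [eventually_all.2 hsides] with b' hb'
  exact slopeIdx_congr hb'

theorem tendsto_integral_norm_slope_sub (b : Fin n → ℝ) (ρ : Fin (n + 1) → ℝ) (x y : ℝ) :
    Tendsto (fun q : (Fin n → ℝ) × (Fin (n + 1) → ℝ) =>
      ∫ u in x..y, ‖q.2 (slopeIdx q.1 u) - ρ (slopeIdx b u)‖) (𝓝 (b, ρ)) (𝓝 0) := by
  have hzero : ∫ _ in x..y, (0 : ℝ) = 0 := intervalIntegral.integral_zero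
  rw [← hzero]
  refine intervalIntegral.tendsto_integral_filter_of_dominated_convergence
    (fun _ => ‖ρ‖ + 1 + ‖ρ‖) (Eventually.of_forall fun q => ?_) ?_ intervalIntegrable_const ?_
  · exact ((measurable_slope q.1 q.2).sub (measurable_slope b ρ)).norm.aestronglyMeasurable
  · filter_upwards [(continuous_snd.norm.continuousAt (x := (b, ρ))).eventually_lt
      continuousAt_const (lt_add_one ‖ρ‖)] with q hq
    refine Eventually.of_forall fun u _ => ?_
    rw [norm_norm]
    exact (norm_sub_le _ _).trans
      (add_le_add ((norm_le_pi_norm q.2 _).trans hq.le) (norm_le_pi_norm ρ _))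
  · have hnull : volume (range b) = 0 := (finite_range b).measure_zero volume
    filter_upwards [measure_eq_zero_iff_ae_notMem.1 hnull] with u hu _
    have hlim : Tendsto (fun q : (Fin n → ℝ) × (Fin (n + 1) → ℝ) =>
        ‖q.2 (slopeIdx b u) - ρ (slopeIdx b u)‖) (𝓝 (b, ρ)) (𝓝 0) := by
      have hcont : Continuous fun q : (Fin n → ℝ) × (Fin (n + 1) → ℝ) =>
        ‖q.2 (slopeIdx b u) - ρ (slopeIdx b u)‖ := by fun_prop
      simpa using hcont.tendsto (b, ρ)
    refine hlim.congr' ?_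
    have hfst : Tendsto Prod.fst (𝓝 (b, ρ)) (𝓝 b) := continuous_fst.tendsto _
    filter_upwards [hfst.eventually (eventually_slopeIdx_eq fun j h => hu ⟨j, h⟩)] with q hq
    rw [hq]

end PiecewiseLinear

theorem abs_plFun_sub_plFun_le {n : ℕ} (b b' : Fin n → ℝ) (ρ ρ' : Fin (n + 1) → ℝ) (τ τ' : ℝ)
    {x R : ℝ} (hx : |x| ≤ R) :
    |plFun b' ρ' τ' x - plFun b ρ τ x| ≤
      |τ' - τ| + |∫ u in (-R)..R, ‖ρ' (slopeIdx b' u) - ρ (slopeIdx b u)‖| := by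
  have hdiff := (intervalIntegrable_slope b' ρ' (-R) R).sub (intervalIntegrable_slope b ρ (-R) R)
  have hsub : uIoc 0 x ⊆ uIoc (-R) R := by
    obtain ⟨hx₁, hx₂⟩ := abs_le.1 hx
    exact uIoc_subset_uIoc_of_uIcc_subset_uIcc <| uIcc_subset_uIcc
      (mem_uIcc_of_le (by linarith) (by linarith)) (mem_uIcc_of_le hx₁ hx₂)
  calc |plFun b' ρ' τ' x - plFun b ρ τ x|
      = |(τ' - τ) + ∫ u in (0 : ℝ)..x, (ρ' (slopeIdx b' u) - ρ (slopeIdx b u))| := by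
        rw [intervalIntegral.integral_sub (intervalIntegrable_slope b' ρ' 0 x)
          (intervalIntegrable_slope b ρ 0 x)]
        exact congrArg _ (add_sub_add_comm _ _ _ _)
    _ ≤ |τ' - τ| + |∫ u in (0 : ℝ)..x, (ρ' (slopeIdx b' u) - ρ (slopeIdx b u))| := abs_add_le _ _
    _ ≤ |τ' - τ| + |∫ u in (0 : ℝ)..x, ‖ρ' (slopeIdx b' u) - ρ (slopeIdx b u)‖| :=
        add_le_add_right (intervalIntegral.norm_integral_le_abs_integral_norm
          (f := fun u => ρ' (slopeIdx b' u) - ρ (slopeIdx b u))) _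
    _ ≤ |τ' - τ| + |∫ u in (-R)..R, ‖ρ' (slopeIdx b' u) - ρ (slopeIdx b u)‖| :=
        add_le_add_right (intervalIntegral.abs_integral_mono_interval hsub
          (Eventually.of_forall fun _ => norm_nonneg _) hdiff.norm) _

section ParameterSpace

variable {p q : Param m l} {r T : ℝ} {K : ℝ≥0}

/-- The parameters with slopes of modulus in `[r, K]` and translations in `[-T, T]`; every
parameter with nonzero slopes of modulus less than one has such a set, with `0 < r` and `K < 1`,
as a neighbourhood. -/
def boundedParams (m : ℕ) (l : Fin m → ℕ) (r : ℝ) (K : ℝ≥0) (T : ℝ) : Set (Param m l) :=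
  {q | (∀ k i, r ≤ |q.2.2 k i| ∧ |q.2.2 k i| ≤ K) ∧ ∀ k, |q.2.1 k| ≤ T}

theorem exists_boundedParams_mem_nhds (hρ : ∀ k i, p.2.2 k i ≠ 0 ∧ |p.2.2 k i| < 1) :
    ∃ r > 0, ∃ K < 1, ∃ T, boundedParams m l r K T ∈ 𝓝 p := by
  have hlow : ∀ᶠ r in 𝓝[>] (0 : ℝ), 0 < r ∧ ∀ k i, r < |p.2.2 k i| :=
    eventually_mem_nhdsWithin.and <| eventually_all.2 fun k => eventually_all.2 fun i =>
      mem_of_superset (Ioo_mem_nhdsGT (abs_pos.2 (hρ k i).1)) fun _ => And.right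
  have hupp : ∀ᶠ K in 𝓝[<] (1 : ℝ≥0), K < 1 ∧ ∀ k i, ‖p.2.2 k i‖₊ < K :=
    eventually_mem_nhdsWithin.and <| eventually_all.2 fun k => eventually_all.2 fun i =>
      mem_of_superset (Ioo_mem_nhdsLT (show ‖p.2.2 k i‖₊ < 1 from (hρ k i).2)) fun _ => And.left
  obtain ⟨r, hr, hrp⟩ := hlow.exists
  have : (𝓝[<] (1 : ℝ≥0)).NeBot := nhdsLT_neBot_of_exists_lt ⟨0, zero_lt_one⟩
  obtain ⟨K, hK, hKp⟩ := hupp.exists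
  refine ⟨r, hr, K, hK, ‖p.2.1‖ + 1, ?_⟩
  have hslope : ∀ᶠ q : Param m l in 𝓝 p, ∀ k i, r ≤ |q.2.2 k i| ∧ |q.2.2 k i| ≤ K :=
    eventually_all.2 fun k => eventually_all.2 fun i => by
      have hcont : ContinuousAt (fun q : Param m l => |q.2.2 k i|) p := by fun_prop
      filter_upwards [continuousAt_const.eventually_lt hcont (hrp k i),
        hcont.eventually_lt continuousAt_const (hKp k i)] with q h₁ h₂
      exact ⟨h₁.le, h₂.le⟩
  have htrans : ∀ᶠ q : Param m l in 𝓝 p, ‖q.2.1‖ < ‖p.2.1‖ + 1 :=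
    ContinuousAt.eventually_lt (by fun_prop) continuousAt_const (lt_add_one _)
  filter_upwards [hslope, htrans] with q hq hτ
  exact ⟨hq, fun k => (norm_le_pi_norm q.2.1 k).trans hτ.le⟩

theorem paramFun_zero (q : Param m l) (k : Fin m) : paramFun m l q k 0 = q.2.1 k :=
  plFun_zero _ _ _

theorem lipschitzWith_paramFun (hq : q ∈ boundedParams m l r K T) (k : Fin m) :
    LipschitzWith K (paramFun m l q k) :=
  lipschitzWith_plFun (fun i => (hq.1 k i).2) _ _

theorem intervalLowerBound_paramFun (hr : 0 ≤ r) (hq : q ∈ boundedParams m l r K T) (k : Fin m) :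
    IntervalLowerBound (r / (∑ k, l k + 1 : ℕ)) (paramFun m l q k) := fun x y hxy =>
  calc r / (∑ k, l k + 1 : ℕ) * (y - x) ≤ r / (l k + 1) * (y - x) := by
        have hle : (l k : ℝ) + 1 ≤ (∑ k, l k + 1 : ℕ) := by
          exact_mod_cast Nat.succ_le_succ
            (Finset.single_le_sum (fun _ _ => Nat.zero_le _) (Finset.mem_univ k))
        have := sub_nonneg.2 hxy
        gcongr
    _ ≤ Metric.diam (paramFun m l q k '' Icc x y) :=
        intervalLowerBound_plFun (fun i => (hq.1 k i).1) _ _ hxy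

theorem eventually_abs_paramFun_sub_le (p : Param m l) {δ : ℝ} (hδ : 0 < δ) (R : ℝ) :
    ∀ᶠ q in 𝓝 p, ∀ k, ∀ x ∈ Metric.closedBall (0 : ℝ) R,
      |paramFun m l q k x - paramFun m l p k x| ≤ δ := by
  refine eventually_all.2 fun k => ?_
  have hpair : Tendsto (fun q : Param m l => (q.1 k, q.2.2 k)) (𝓝 p) (𝓝 (p.1 k, p.2.2 k)) :=
    Continuous.tendsto (by fun_prop) p
  have hτ : Tendsto (fun q : Param m l => |q.2.1 k - p.2.1 k|) (𝓝 p) (𝓝 0) := by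
    have hcont : Continuous fun q : Param m l => |q.2.1 k - p.2.1 k| := by fun_prop
    simpa using hcont.tendsto p
  have hint := ((tendsto_integral_norm_slope_sub (p.1 k) (p.2.2 k) (-R) R).comp hpair).abs
  have hlim := hτ.add hint
  rw [abs_zero, add_zero] at hlim
  filter_upwards [hlim.eventually_lt_const hδ] with q hq x hx
  exact (abs_plFun_sub_plFun_le _ _ _ _ _ _ (mem_closedBall_zero_iff.1 hx)).trans hq.le

end ParameterSpace

section Words

variable {ι : Type*} {S : ι → ℝ → ℝ}

theorem compFam_cons (S : ι → ℝ → ℝ) (k : ι) (w : List ι) :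
    compFam S (k :: w) = S k ∘ compFam S w := rfl

theorem compFam_append (S : ι → ℝ → ℝ) (u v : List ι) :
    compFam S (u ++ v) = compFam S u ∘ compFam S v := by
  induction u with
  | nil => rfl
  | cons k u ih => rw [List.cons_append, compFam_cons, compFam_cons, ih, Function.comp_assoc]

theorem compFam_image_cons (S : ι → ℝ → ℝ) (k : ι) (w : List ι) (D : Set ℝ) :
    compFam S (k :: w) '' D = S k '' (compFam S w '' D) := by
  rw [compFam_cons, image_comp]

theorem compFam_affine (r t : ι → ℝ) (w : List ι) (x : ℝ) :
    compFam (fun i y => r i * y + t i) w x =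
      (w.map r).prod * x + compFam (fun i y => r i * y + t i) w 0 := by
  induction w with
  | nil => simp [compFam]
  | cons k w ih =>
    simp only [compFam_cons, Function.comp_apply, List.map_cons, List.prod_cons]
    rw [ih]
    ring

theorem NoExactOverlap.eq_of_compFam_eq (hS : NoExactOverlap S) {u v : List ι}
    (hlen : u.length = v.length) (huv : compFam S u = compFam S v) : u = v := by
  obtain ⟨n, i, rfl⟩ : ∃ (n : ℕ) (i : Fin n → ι), List.ofFn i = u := ⟨_, _, List.ofFn_get u⟩
  obtain ⟨n', j, rfl⟩ : ∃ (n : ℕ) (j : Fin n → ι), List.ofFn j = v := ⟨_, _, List.ofFn_get v⟩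
  obtain rfl : n = n' := by simpa only [List.length_ofFn] using hlen
  rcases Nat.eq_zero_or_pos n with rfl | hn
  · rw [List.ofFn_zero, List.ofFn_zero]
  · rw [hS n hn i j huv]

/-- Affine maps with a common fixed point commute, so that `uv` and `vu` overlap exactly. -/
theorem NoExactOverlap.eq_of_common_fixedPoint {r t : ι → ℝ}
    (hS : NoExactOverlap fun i y => r i * y + t i) {u v : List ι} (hlen : u.length = v.length)
    {β : ℝ} (hu : compFam (fun i y => r i * y + t i) u β = β)
    (hv : compFam (fun i y => r i * y + t i) v β = β) : u = v := by
  have hcomm : compFam (fun i y => r i * y + t i) (u ++ v) =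
      compFam (fun i y => r i * y + t i) (v ++ u) := by
    funext x
    simp only [compFam_append, Function.comp_apply]
    rw [compFam_affine r t u] at hu
    rw [compFam_affine r t v] at hv
    rw [compFam_affine r t u, compFam_affine r t v, compFam_affine r t v (compFam _ u x),
      compFam_affine r t u x]
    linear_combination (1 - (v.map r).prod) * hu - (1 - (u.map r).prod) * hv
  exact (List.append_inj (hS.eq_of_compFam_eq (by simp [Nat.add_comm]) hcomm) hlen).1

end Words

section ReturningBreaks

variable {p : Param m l} {t : (k : Fin m) → Fin (l k + 1) → ℝ}

/-- No breaking point of a map `f_k` returns to itself along an orbit whose first step is `f_k`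
(the first map applied is the last letter of the word). This is what the proof uses of the absence
of exact overlaps. -/
def NoReturningBreak (p : Param m l) : Prop :=
  ∀ k j v, compFam (paramFun m l p) (v ++ [k]) (p.1 k j) ≠ p.1 k j

/-- `t k i` is the intercept of the affine map that agrees with the `k`-th map of the system on
its `i`-th open interval of linearity, so that these maps form the generated self-similar IFS. -/
def IsBranchIntercept (p : Param m l) (t : (k : Fin m) → Fin (l k + 1) → ℝ) : Prop :=
  ∀ (k : Fin m) (i : Fin (l k + 1)) (x : ℝ),
    (∀ j : Fin (l k), (j : ℕ) < i → p.1 k j < x) →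
    (∀ j : Fin (l k), (i : ℕ) ≤ j → x < p.1 k j) →
    paramFun m l p k x = p.2.2 k i * x + t k i

theorem exists_mem_open_piece {n : ℕ} {b : Fin n → ℝ} (hb : StrictMono b) (i : ℕ) :
    ∃ c, (∀ j : Fin n, (j : ℕ) < i → b j < c) ∧ ∀ j : Fin n, i ≤ (j : ℕ) → c < b j := by
  obtain ⟨c, hlo, hhi⟩ := Order.exists_between_finsets
    ((Finset.univ.filter fun j : Fin n => (j : ℕ) < i).image b)
    ((Finset.univ.filter fun j : Fin n => i ≤ (j : ℕ)).image b) (by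
      simp only [Finset.mem_image, Finset.mem_filter, Finset.mem_univ, true_and]
      rintro _ ⟨j, hj, rfl⟩ _ ⟨j', hj', rfl⟩
      exact hb (Fin.lt_def.2 (hj.trans_le hj')))
  simp only [Finset.mem_image, Finset.mem_filter, Finset.mem_univ, true_and,
    forall_exists_index, and_imp, forall_apply_eq_imp_iff₂] at hlo hhi
  exact ⟨c, hlo, hhi⟩

theorem IsBranchIntercept.paramFun_eq (ht : IsBranchIntercept p t) {k : Fin m}
    (hb : StrictMono (p.1 k)) {i : Fin (l k + 1)} {x : ℝ}
    (hlo : ∀ j : Fin (l k), (j : ℕ) < i → p.1 k j ≤ x)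
    (hhi : ∀ j : Fin (l k), (i : ℕ) ≤ j → x ≤ p.1 k j) :
    paramFun m l p k x = p.2.2 k i * x + t k i := by
  obtain ⟨c, hclo, hchi⟩ := exists_mem_open_piece hb i
  have hopen : openSegment ℝ c x ⊆ {y | paramFun m l p k y = p.2.2 k i * y + t k i} := by
    rintro _ ⟨α, β, hα, hβ, hαβ, rfl⟩
    have hmix : ∀ z, α * z + β * z = z := fun z => by rw [← add_mul, hαβ, one_mul]
    refine ht k i _ (fun j hj => ?_) (fun j hj => ?_)
    · exact (hmix (p.1 k j)).symm.trans_lt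
        (add_lt_add_of_lt_of_le (mul_lt_mul_of_pos_left (hclo j hj) hα)
          (mul_le_mul_of_nonneg_left (hlo j hj) hβ.le))
    · exact (add_lt_add_of_lt_of_le (mul_lt_mul_of_pos_left (hchi j hj) hα)
          (mul_le_mul_of_nonneg_left (hhi j hj) hβ.le)).trans_eq (hmix (p.1 k j))
  have hclosed : IsClosed {y | paramFun m l p k y = p.2.2 k i * y + t k i} :=
    isClosed_eq (continuous_plFun _ _ _) (by fun_prop)
  exact closure_minimal hopen hclosed
    (segment_subset_closure_openSegment (right_mem_segment ℝ c x))

theorem IsBranchIntercept.exists_compFam_eq (ht : IsBranchIntercept p t)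
    (hb : ∀ k, StrictMono (p.1 k)) (w : List (Fin m)) (x : ℝ) :
    ∃ w', compFam (fun (q : Σ k : Fin m, Fin (l k + 1)) y => p.2.2 q.1 q.2 * y + t q.1 q.2) w' x =
      compFam (paramFun m l p) w x := by
  induction w with
  | nil => exact ⟨[], rfl⟩
  | cons k w ih =>
    obtain ⟨w', hw'⟩ := ih
    refine ⟨⟨k, slopeIdx (p.1 k) (compFam (paramFun m l p) w x)⟩ :: w', ?_⟩
    rw [compFam_cons, compFam_cons, Function.comp_apply, Function.comp_apply, hw']
    refine (ht.paramFun_eq (hb k) (fun j hj => ?_) (fun j hj => ?_)).symm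
    · exact ((slopeIdx_lt_iff (hb k).monotone).2 hj).le
    · exact not_lt.1 fun h => hj.not_gt ((slopeIdx_lt_iff (hb k).monotone).1 h)

/-- A breaking point lies on two branches of its map, so a return to it would give two words of
affine maps with a common fixed point. -/
theorem IsBranchIntercept.noReturningBreak (ht : IsBranchIntercept p t)
    (hb : ∀ k, StrictMono (p.1 k))
    (hov : NoExactOverlap fun (q : Σ k : Fin m, Fin (l k + 1)) y =>
      p.2.2 q.1 q.2 * y + t q.1 q.2) :
    NoReturningBreak p := by
  intro k j v hfix
  obtain ⟨v', hv'⟩ := ht.exists_compFam_eq hb v (paramFun m l p k (p.1 k j))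
  have hbranch : ∀ i : Fin (l k + 1), (i = j.castSucc ∨ i = j.succ) →
      compFam (fun (q : Σ k : Fin m, Fin (l k + 1)) y => p.2.2 q.1 q.2 * y + t q.1 q.2)
        (v' ++ [⟨k, i⟩]) (p.1 k j) = p.1 k j := by
    intro i hi
    have hpiece : paramFun m l p k (p.1 k j) = p.2.2 k i * p.1 k j + t k i := by
      refine ht.paramFun_eq (hb k) (fun j' hj' => (hb k).monotone (Fin.le_def.2 ?_))
        (fun j' hj' => (hb k).monotone (Fin.le_def.2 ?_)) <;>
      rcases hi with rfl | rfl <;> simp only [Fin.val_castSucc, Fin.val_succ] at hj' <;> omega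
    calc compFam (fun (q : Σ k : Fin m, Fin (l k + 1)) y => p.2.2 q.1 q.2 * y + t q.1 q.2)
          (v' ++ [⟨k, i⟩]) (p.1 k j)
        = compFam (paramFun m l p) v (paramFun m l p k (p.1 k j)) := by
          rw [compFam_append, ← hv', hpiece]
          rfl
      _ = p.1 k j := by
          rwa [compFam_append] at hfix
  have heq := hov.eq_of_common_fixedPoint (by simp) (hbranch _ (.inl rfl)) (hbranch _ (.inr rfl))
  exact Fin.castSucc_lt_succ.ne (by simpa using heq)

end ReturningBreaks

section SuffixCount

variable {ι : Type*} {P : List ι → Prop}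

open Classical in
/-- The number of suffixes of the word `w` with property `P`: since the rightmost letter acts first,
this counts the times at which an orbit coded by `w` has property `P`. -/
def suffixCount (P : List ι → Prop) (w : List ι) : ℕ :=
  w.tails.countP fun u => P u

theorem suffixCount_cons_of_pos {k : ι} {w : List ι} (h : P (k :: w)) :
    suffixCount P (k :: w) = suffixCount P w + 1 := by
  rw [suffixCount, List.tails_cons, List.countP_cons_of_pos (by simpa using h), suffixCount]

theorem suffixCount_cons_of_neg {k : ι} {w : List ι} (h : ¬ P (k :: w)) :
    suffixCount P (k :: w) = suffixCount P w := by
  rw [suffixCount, List.tails_cons, List.countP_cons_of_neg (by simpa using h), suffixCount]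

theorem suffixCount_nil_le_one (P : List ι → Prop) : suffixCount P [] ≤ 1 :=
  List.countP_le_length

theorem suffixCount_mul_le {N : ℕ} (hP : ∀ v u, v ≠ [] → P u → P (v ++ u) → N ≤ v.length)
    (w : List ι) : suffixCount P w * N ≤ w.length + N := by
  suffices h : suffixCount P w = 0 ∨
      ∃ u, u <:+ w ∧ P u ∧ suffixCount P w * N ≤ u.length + N by
    rcases h with h | ⟨u, hu, -, hle⟩
    · simp [h]
    · exact hle.trans (Nat.add_le_add_right hu.length_le N)
  induction w with
  | nil =>
    by_cases h : P []
    · exact .inr ⟨[], List.suffix_rfl, h, by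
        simpa using Nat.mul_le_mul_right N (suffixCount_nil_le_one P)⟩
    · exact .inl (by simp [suffixCount, h])
  | cons k w ih =>
    by_cases h : P (k :: w)
    · refine .inr ⟨k :: w, List.suffix_rfl, h, ?_⟩
      rw [suffixCount_cons_of_pos h, Nat.succ_mul]
      refine Nat.add_le_add_right ?_ N
      rcases ih with h0 | ⟨u, ⟨v, rfl⟩, hu, hle⟩
      · simp [h0]
      · have hsep : N ≤ (k :: v).length := hP (k :: v) u (List.cons_ne_nil _ _) hu h
        simp only [List.length_cons, List.length_append] at hsep ⊢
        omega
    · rw [suffixCount_cons_of_neg h]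
      exact ih.imp_right fun ⟨u, hu, hPu, hle⟩ => ⟨u, hu.trans (List.suffix_cons k w), hPu, hle⟩

theorem suffixCount_length_le (q : ℕ) (w : List ι) :
    suffixCount (fun u => u.length ≤ q) w ≤ q + 1 := by
  suffices h : suffixCount (fun u => u.length ≤ q) w ≤ min w.length q + 1 from
    h.trans (Nat.succ_le_succ (min_le_right _ _))
  induction w with
  | nil => simpa using suffixCount_nil_le_one _
  | cons k w ih =>
    by_cases h : (k :: w).length ≤ q
    · rw [suffixCount_cons_of_pos h]
      rw [List.length_cons] at h ⊢
      omega
    · rw [suffixCount_cons_of_neg h]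
      exact ih.trans (by simp)

theorem suffixCount_or_le (P Q : List ι → Prop) (w : List ι) :
    suffixCount (fun u => P u ∨ Q u) w ≤ suffixCount P w + suffixCount Q w := by
  simp only [suffixCount]
  induction w.tails with
  | nil => simp
  | cons u L ih => by_cases hP : P u <;> by_cases hQ : Q u <;> simp [hP, hQ] <;> omega

theorem suffixCount_exists_le {κ : Type*} [Fintype κ] (P : κ → List ι → Prop) (w : List ι) :
    suffixCount (fun u => ∃ i, P i u) w ≤ ∑ i, suffixCount (P i) w := by
  simp only [suffixCount]
  induction w.tails with
  | nil => simp
  | cons u L ih =>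
    simp only [List.countP_cons, Finset.sum_add_distrib]
    refine add_le_add ih ?_
    split_ifs with h
    · obtain ⟨i, hi⟩ : ∃ i, P i u := by simpa using h
      refine le_trans ?_ (Finset.single_le_sum (fun _ _ => Nat.zero_le _) (Finset.mem_univ i))
      simp [hi]
    · exact Nat.zero_le _

theorem abs_sub_nil_le {R : List ι → ℝ} {α β : ℝ} (hα : 0 ≤ α) (hβ : 0 ≤ β)
    (hgood : ∀ k w, ¬ P (k :: w) → |R (k :: w) - R w| ≤ α)
    (hall : ∀ k w, |R (k :: w) - R w| ≤ β) (w : List ι) :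
    |R w - R []| ≤ α * w.length + β * suffixCount P w := by
  induction w with
  | nil => simpa using mul_nonneg hβ (Nat.cast_nonneg _)
  | cons k w ih =>
    have htri : |R (k :: w) - R []| ≤ |R (k :: w) - R w| + |R w - R []| := abs_sub_le _ _ _
    rw [List.length_cons, Nat.cast_succ]
    by_cases h : P (k :: w)
    · rw [suffixCount_cons_of_pos h, Nat.cast_succ]
      linarith [hall k w]
    · rw [suffixCount_cons_of_neg h]
      linarith [hgood k w h]

theorem abs_le_of_suffixCount_le {R : List ι → ℝ} {α β γ M : ℝ} (hα : 0 ≤ α) (hβ : 0 ≤ β)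
    (hgood : ∀ k w, ¬ P (k :: w) → |R (k :: w) - R w| ≤ α)
    (hall : ∀ k w, |R (k :: w) - R w| ≤ β)
    (hcount : ∀ w, (suffixCount P w : ℝ) ≤ γ * w.length + M) (w : List ι) :
    |R w| ≤ |R []| + β * M + (α + β * γ) * w.length := by
  have hdrift := abs_sub_nil_le hα hβ hgood hall w
  have hβcount := mul_le_mul_of_nonneg_left (hcount w) hβ
  linarith [abs_sub_abs_le_abs_sub (R w) (R [])]

end SuffixCount

section SupportingInterval

variable {f : Fin m → ℝ → ℝ} {K : ℝ≥0} {T : ℝ}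

/-- Nonempty compact intervals mapped into themselves by every map of the system `f`; unless the
attractor is a point, the supporting interval is their intersection. -/
def IsInvariantInterval (f : Fin m → ℝ → ℝ) (J : Set ℝ) : Prop :=
  J.Nonempty ∧ (∃ a b : ℝ, J = Icc a b) ∧ ∀ k, f k '' J ⊆ J

theorem suppInt_eq_sInter (h : ¬ ∃ φ : ℝ, ∀ k, f k φ = φ) :
    suppInt f = ⋂₀ {J | IsInvariantInterval f J} :=
  dif_neg h

theorem exists_suppInt_eq_Icc_of_fixed (h : ∃ φ : ℝ, ∀ k, f k φ = φ) :
    ∃ φ, (∀ k, f k φ = φ) ∧ suppInt f = Icc (φ - 1 / 2) (φ + 1 / 2) :=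
  ⟨h.choose, h.choose_spec, dif_pos h⟩

theorem abs_apply_le_of_lipschitzWith {g : ℝ → ℝ} (hg : LipschitzWith K g) (x : ℝ) :
    |g x| ≤ K * |x| + |g 0| := by
  have h := hg.dist_le_mul x 0
  rw [Real.dist_eq, Real.dist_eq, sub_zero] at h
  linarith [abs_sub_abs_le_abs_sub (g x) (g 0)]

theorem mapsTo_closedBall {g : ℝ → ℝ} (hg : LipschitzWith K g) (hK : K < 1) (h0 : |g 0| ≤ T)
    {R : ℝ} (hR : T / (1 - K) ≤ R) :
    MapsTo g (Metric.closedBall 0 R) (Metric.closedBall 0 R) := fun x hx => by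
  have hTR : T ≤ R * (1 - K) := (div_le_iff₀ (sub_pos.2 (NNReal.coe_lt_one.2 hK))).1 hR
  rw [mem_closedBall_zero_iff, Real.norm_eq_abs] at hx ⊢
  have hKx : K * |x| ≤ K * R := mul_le_mul_of_nonneg_left hx K.2
  linarith [abs_apply_le_of_lipschitzWith hg x]

theorem suppInt_subset_closedBall [NeZero m] (hf : ∀ k, LipschitzWith K (f k)) (hK : K < 1)
    (hT : ∀ k, |f k 0| ≤ T) : suppInt f ⊆ Metric.closedBall 0 (T / (1 - K) + 1) := by
  have hK' : (0 : ℝ) < 1 - K := sub_pos.2 (NNReal.coe_lt_one.2 hK)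
  by_cases h : ∃ φ : ℝ, ∀ k, f k φ = φ
  · obtain ⟨φ, hφ, hI⟩ := exists_suppInt_eq_Icc_of_fixed h
    have hφT : |φ| ≤ T / (1 - K) := by
      have hle := abs_apply_le_of_lipschitzWith (hf 0) φ
      rw [hφ 0] at hle
      rw [le_div_iff₀ hK']
      linarith [hT 0]
    rw [hI, Real.closedBall_eq_Icc]
    obtain ⟨h₁, h₂⟩ := abs_le.1 hφT
    exact Icc_subset_Icc (by linarith) (by linarith)
  · rw [suppInt_eq_sInter h]
    have hT0 : 0 ≤ T / (1 - K) := div_nonneg ((abs_nonneg _).trans (hT 0)) hK'.le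
    exact sInter_subset_of_mem ⟨Metric.nonempty_closedBall.2 (by linarith),
      ⟨_, _, Real.closedBall_eq_Icc⟩,
      fun k => (mapsTo_closedBall (hf k) hK (hT k) (by linarith)).image_subset⟩

theorem IsInvariantInterval.fixedPoint_mem {J : Set ℝ} (hJ : IsInvariantInterval f J) {k : Fin m}
    (hk : ContractingWith K (f k)) : hk.fixedPoint (f k) ∈ J := by
  obtain ⟨⟨x, hx⟩, ⟨a, b, rfl⟩, hinv⟩ := hJ
  exact isClosed_Icc.mem_of_tendsto (hk.tendsto_iterate_fixedPoint x)
    (Eventually.of_forall fun n => (mapsTo_iff_image_subset.2 (hinv k)).iterate n hx)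

theorem exists_suppInt_eq_Icc [NeZero m] (hf : ∀ k, ContractingWith K (f k)) :
    ∃ a b, a < b ∧ suppInt f = Icc a b := by
  by_cases h : ∃ φ : ℝ, ∀ k, f k φ = φ
  · obtain ⟨φ, -, hI⟩ := exists_suppInt_eq_Icc_of_fixed h
    exact ⟨_, _, by linarith, hI⟩
  have hclosed : IsClosed (suppInt f) := by
    rw [suppInt_eq_sInter h]
    refine isClosed_sInter ?_
    rintro J ⟨-, ⟨a, b, rfl⟩, -⟩
    exact isClosed_Icc
  have hord : OrdConnected (suppInt f) := by
    rw [suppInt_eq_sInter h]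
    refine ordConnected_sInter ?_
    rintro J ⟨-, ⟨a, b, rfl⟩, -⟩
    exact ordConnected_Icc
  have hne : (suppInt f).Nonempty := by
    rw [suppInt_eq_sInter h]
    exact ⟨_, fun J hJ => IsInvariantInterval.fixedPoint_mem hJ (hf 0)⟩
  have hbdd : suppInt f ⊆ Metric.closedBall 0 _ :=
    suppInt_subset_closedBall (fun k => (hf k).2) (hf 0).1
      fun k => norm_le_pi_norm (fun k => f k 0) k
  obtain ⟨a, b, hab⟩ : ∃ a b, suppInt f = Icc a b :=
    ⟨_, _, eq_Icc_of_connected_compact ⟨hne, hord.isPreconnected⟩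
      ((isCompact_closedBall 0 _).of_isClosed_subset hclosed hbdd)⟩
  have hle : a ≤ b := nonempty_Icc.1 (hab ▸ hne)
  refine ⟨a, b, hle.lt_of_ne ?_, hab⟩
  rintro rfl
  have hinv : ∀ k, MapsTo (f k) (suppInt f) (suppInt f) := by
    rw [suppInt_eq_sInter h]
    exact fun k x hx J hJ => hJ.2.2 k (mem_image_of_mem _ (hx J hJ))
  rw [hab, Icc_self] at hinv
  exact h ⟨a, fun k => hinv k rfl⟩

end SupportingInterval

section Cylinders

variable {f : Fin m → ℝ → ℝ} {K : ℝ≥0} {c : ℝ}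

/-- The length `|I_w|` of the cylinder interval of the word `w`. -/
def cylLen (f : Fin m → ℝ → ℝ) (w : List (Fin m)) : ℝ :=
  Metric.diam (compFam f w '' suppInt f)

/-- The cylinder intervals are nondegenerate and their lengths are exponential in the word length,
from above and below; this keeps the pressure finite. -/
def HasTemperedCylinders (f : Fin m → ℝ → ℝ) : Prop :=
  ∃ C, ∀ w, 0 < cylLen f w ∧ |Real.log (cylLen f w)| ≤ C * (w.length + 1)

theorem exists_cylinder_eq_Icc [NeZero m] (hf : ∀ k, ContractingWith K (f k))
    (w : List (Fin m)) : ∃ a b, a ≤ b ∧ compFam f w '' suppInt f = Icc a b := by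
  induction w with
  | nil =>
    obtain ⟨a, b, hab, hI⟩ := exists_suppInt_eq_Icc hf
    exact ⟨a, b, hab.le, (image_id _).trans hI⟩
  | cons k w ih =>
    obtain ⟨a, b, hab, hw⟩ := ih
    have himage : compFam f (k :: w) '' suppInt f =
        Icc (sInf (f k '' Icc a b)) (sSup (f k '' Icc a b)) := by
      rw [compFam_image_cons, hw]
      exact (hf k).2.continuous.continuousOn.image_Icc hab
    refine ⟨_, _, nonempty_Icc.1 ?_, himage⟩
    rw [← himage, compFam_image_cons, hw]
    exact (nonempty_Icc.2 hab).image (f k)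

theorem cylLen_cons_le [NeZero m] (hf : ∀ k, ContractingWith K (f k)) (k : Fin m)
    (w : List (Fin m)) : cylLen f (k :: w) ≤ K * cylLen f w := by
  obtain ⟨a, b, -, hw⟩ := exists_cylinder_eq_Icc hf w
  rw [cylLen, cylLen, compFam_image_cons, hw]
  exact (hf k).2.diam_image_le _ (Metric.isBounded_Icc a b)

theorem mul_cylLen_le_cylLen_cons [NeZero m] (hf : ∀ k, ContractingWith K (f k))
    (hc : ∀ k, IntervalLowerBound c (f k)) (k : Fin m) (w : List (Fin m)) :
    c * cylLen f w ≤ cylLen f (k :: w) := by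
  obtain ⟨a, b, hab, hw⟩ := exists_cylinder_eq_Icc hf w
  rw [cylLen, cylLen, compFam_image_cons, hw, Real.diam_Icc hab]
  exact hc k hab

theorem cylLen_pos [NeZero m] (hf : ∀ k, ContractingWith K (f k))
    (hc : ∀ k, IntervalLowerBound c (f k)) (hc0 : 0 < c) (w : List (Fin m)) :
    0 < cylLen f w := by
  induction w with
  | nil =>
    obtain ⟨a, b, hab, hI⟩ := exists_suppInt_eq_Icc hf
    have himage : compFam f [] '' suppInt f = Icc a b := (image_id _).trans hI
    rw [cylLen, himage, Real.diam_Icc hab.le]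
    exact sub_pos.2 hab
  | cons k w ih => exact (mul_pos hc0 ih).trans_le (mul_cylLen_le_cylLen_cons hf hc k w)

theorem lipschitzConst_pos [NeZero m] (hf : ∀ k, ContractingWith K (f k))
    (hc : ∀ k, IntervalLowerBound c (f k)) (hc0 : 0 < c) : 0 < (K : ℝ) :=
  pos_of_mul_pos_left ((cylLen_pos hf hc hc0 [0]).trans_le (cylLen_cons_le hf 0 []))
    (cylLen_pos hf hc hc0 []).le

theorem log_cylLen_cons_le [NeZero m] (hf : ∀ k, ContractingWith K (f k))
    (hc : ∀ k, IntervalLowerBound c (f k)) (hc0 : 0 < c) (k : Fin m) (w : List (Fin m)) :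
    Real.log (cylLen f (k :: w)) ≤ Real.log K + Real.log (cylLen f w) := by
  have hpos := cylLen_pos hf hc hc0
  rw [← Real.log_mul (lipschitzConst_pos hf hc hc0).ne' (hpos w).ne']
  exact Real.log_le_log (hpos _) (cylLen_cons_le hf k w)

theorem abs_log_cylLen_cons_sub_le [NeZero m] (hf : ∀ k, ContractingWith K (f k))
    (hc : ∀ k, IntervalLowerBound c (f k)) (hc0 : 0 < c) (k : Fin m) (w : List (Fin m)) :
    |Real.log (cylLen f (k :: w)) - Real.log (cylLen f w)| ≤ -Real.log c := by
  have hpos := cylLen_pos hf hc hc0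
  have hlow : Real.log c + Real.log (cylLen f w) ≤ Real.log (cylLen f (k :: w)) := by
    rw [← Real.log_mul hc0.ne' (hpos w).ne']
    exact Real.log_le_log (mul_pos hc0 (hpos w)) (mul_cylLen_le_cylLen_cons hf hc k w)
  have hupp := log_cylLen_cons_le hf hc hc0 k w
  have hK : Real.log K ≤ 0 := Real.log_nonpos K.2 (hf k).1.le
  rw [abs_le]
  constructor <;> linarith

theorem log_cylLen_le [NeZero m] (hf : ∀ k, ContractingWith K (f k))
    (hc : ∀ k, IntervalLowerBound c (f k)) (hc0 : 0 < c) (w : List (Fin m)) :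
    Real.log (cylLen f w) ≤ Real.log (cylLen f []) + Real.log K * w.length := by
  induction w with
  | nil => simp
  | cons k w ih =>
    rw [List.length_cons, Nat.cast_succ]
    linarith [log_cylLen_cons_le hf hc hc0 k w]

theorem hasTemperedCylinders [NeZero m] (hf : ∀ k, ContractingWith K (f k))
    (hc : ∀ k, IntervalLowerBound c (f k)) (hc0 : 0 < c) : HasTemperedCylinders f := by
  have hstep := abs_log_cylLen_cons_sub_le hf hc hc0
  have hc1 : 0 ≤ -Real.log c := (abs_nonneg _).trans (hstep 0 [])
  refine ⟨|Real.log (cylLen f [])| + -Real.log c, fun w => ⟨cylLen_pos hf hc hc0 w, ?_⟩⟩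
  induction w with
  | nil => simpa using hc1
  | cons k w ih =>
    rw [List.length_cons, Nat.cast_succ]
    have htri := abs_sub_abs_le_abs_sub (Real.log (cylLen f (k :: w))) (Real.log (cylLen f w))
    linarith [hstep k w, abs_nonneg (Real.log (cylLen f []))]

end Cylinders

section Shadowing

theorem mapsTo_compFam {ι : Type*} {f : ι → ℝ → ℝ} {D : Set ℝ} (hf : ∀ k, MapsTo (f k) D D)
    (w : List ι) : MapsTo (compFam f w) D D := by
  induction w with
  | nil => exact mapsTo_id D
  | cons k w ih => exact (hf k).comp ih

theorem lipschitzWith_compFam {ι : Type*} {f : ι → ℝ → ℝ} {K : ℝ≥0}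
    (hf : ∀ k, LipschitzWith K (f k)) (w : List ι) :
    LipschitzWith (K ^ w.length) (compFam f w) := by
  induction w with
  | nil => exact (pow_zero K).symm ▸ LipschitzWith.id
  | cons k w ih =>
    rw [List.length_cons, pow_succ']
    exact (hf k).comp ih

theorem abs_compFam_sub_compFam_le {ι : Type*} {f g : ι → ℝ → ℝ} {K : ℝ≥0} {D : Set ℝ} {δ : ℝ}
    (hg : ∀ k, LipschitzWith K (g k)) (hK : K < 1) (hf : ∀ k, MapsTo (f k) D D)
    (hgf : ∀ k, ∀ x ∈ D, |g k x - f k x| ≤ δ) (hδ : 0 ≤ δ) {y : ℝ} (hy : y ∈ D) (x : ℝ)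
    (w : List ι) :
    |compFam g w x - compFam f w y| ≤ K ^ w.length * |x - y| + δ / (1 - K) := by
  have hK' : (0 : ℝ) < 1 - K := sub_pos.2 (NNReal.coe_lt_one.2 hK)
  induction w with
  | nil => simpa [compFam] using div_nonneg hδ hK'.le
  | cons k w ih =>
    have hlip := (hg k).dist_le_mul (compFam g w x) (compFam f w y)
    rw [Real.dist_eq, Real.dist_eq] at hlip
    calc |g k (compFam g w x) - f k (compFam f w y)|
        ≤ |g k (compFam g w x) - g k (compFam f w y)|
          + |g k (compFam f w y) - f k (compFam f w y)| := abs_sub_le _ _ _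
      _ ≤ K * (K ^ w.length * |x - y| + δ / (1 - K)) + δ :=
        add_le_add (hlip.trans (mul_le_mul_of_nonneg_left ih K.2))
          (hgf k _ (mapsTo_compFam hf w hy))
      _ = K ^ (k :: w).length * |x - y| + δ / (1 - K) := by
        rw [List.length_cons]
        field_simp
        ring

theorem exists_eventually_abs_compFam_paramFun_sub_le [NeZero m] {p : Param m l} {r T : ℝ}
    {K : ℝ≥0} (hK : K < 1) (hp : boundedParams m l r K T ∈ 𝓝 p) {η : ℝ} (hη : 0 < η) :
    ∃ N, ∀ᶠ q in 𝓝 p, ∀ w : List (Fin m), N ≤ w.length → ∀ x ∈ suppInt (paramFun m l q),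
      |compFam (paramFun m l q) w x - compFam (paramFun m l p) w 0| ≤ η := by
  have hK' : (0 : ℝ) < 1 - K := sub_pos.2 (NNReal.coe_lt_one.2 hK)
  have hzero : ∀ {q}, q ∈ boundedParams m l r K T → ∀ k, |paramFun m l q k 0| ≤ T :=
    fun hq k => (paramFun_zero _ k).symm ▸ hq.2 k
  have hp' := mem_of_mem_nhds hp
  set R := T / (1 - K) + 1
  have hR : 0 ≤ R :=
    add_nonneg (div_nonneg ((abs_nonneg _).trans (hzero hp' 0)) hK'.le) zero_le_one
  have hpow : Tendsto (fun n : ℕ => (K : ℝ) ^ n * R) atTop (𝓝 (0 * R)) :=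
    (tendsto_pow_atTop_nhds_zero_of_lt_one K.2 (NNReal.coe_lt_one.2 hK)).mul_const R
  rw [zero_mul] at hpow
  obtain ⟨N, hN⟩ := eventually_atTop.1 (hpow.eventually_le_const (half_pos hη))
  refine ⟨N, ?_⟩
  filter_upwards [hp, eventually_abs_paramFun_sub_le p (mul_pos (half_pos hη) hK') R]
    with q hq hqp w hw x hx
  have hxR := suppInt_subset_closedBall (lipschitzWith_paramFun hq) hK (hzero hq) hx
  have hmaps : ∀ k, MapsTo (paramFun m l p k) (Metric.closedBall 0 R) (Metric.closedBall 0 R) :=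
    fun k => mapsTo_closedBall (lipschitzWith_paramFun hp' k) hK (hzero hp' k)
      (le_add_of_nonneg_right zero_le_one)
  calc |compFam (paramFun m l q) w x - compFam (paramFun m l p) w 0|
      ≤ K ^ w.length * |x - 0| + η / 2 * (1 - K) / (1 - K) :=
        abs_compFam_sub_compFam_le (lipschitzWith_paramFun hq) hK hmaps hqp
          (mul_pos (half_pos hη) hK').le (Metric.mem_closedBall_self hR) x w
    _ ≤ K ^ w.length * R + η / 2 := by
        rw [mul_div_cancel_right₀ _ hK'.ne', sub_zero]
        exact add_le_add_left
          (mul_le_mul_of_nonneg_left (mem_closedBall_zero_iff.1 hxR) (by positivity)) _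
    _ ≤ η := by linarith [hN _ hw]

end Shadowing

section RareVisits

/-- The orbit of `x₀` coded by `u` (rightmost letter first) comes within `ε` of `β` just before the
last map `f k` is applied. -/
def IsNearVisit {ι : Type*} (f : ι → ℝ → ℝ) (x₀ : ℝ) (k : ι) (β ε : ℝ) (u : List ι) : Prop :=
  ∃ w, u = k :: w ∧ |compFam f w x₀ - β| ≤ ε

theorem IsNearVisit.le_length_of_append {ι : Type*} {f : ι → ℝ → ℝ} {x₀ β ε : ℝ} {k : ι} {N : ℕ}
    (hf : ∀ k, LipschitzWith 1 (f k))
    (hret : ∀ v : List ι, v.length < N → 2 * ε < |compFam f (v ++ [k]) β - β|) {v u : List ι}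
    (hv : v ≠ []) (hu : IsNearVisit f x₀ k β ε u) (hvu : IsNearVisit f x₀ k β ε (v ++ u)) :
    N ≤ v.length := by
  obtain ⟨w, rfl, hw⟩ := hu
  obtain ⟨w', hw', hww'⟩ := hvu
  obtain ⟨_, v, rfl⟩ := List.exists_cons_of_ne_nil hv
  obtain ⟨-, rfl⟩ := List.cons.inj (List.cons_append.symm.trans hw')
  by_contra! hlt
  have horbit : compFam f (v ++ k :: w) x₀ = compFam f (v ++ [k]) (compFam f w x₀) := by
    rw [← List.singleton_append, ← List.append_assoc, compFam_append, Function.comp_apply]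
  have hclose : |compFam f (v ++ [k]) β - compFam f (v ++ [k]) (compFam f w x₀)| ≤ ε := by
    have hlip := (lipschitzWith_compFam hf (v ++ [k])).dist_le_mul β (compFam f w x₀)
    rw [one_pow, NNReal.coe_one, one_mul, Real.dist_eq, Real.dist_eq, abs_sub_comm β] at hlip
    exact hlip.trans hw
  rw [horbit] at hww'
  have hfar := hret v ((Nat.lt_succ_self _).trans hlt)
  linarith [abs_sub_le (compFam f (v ++ [k]) β) (compFam f (v ++ [k]) (compFam f w x₀)) β]

variable {p : Param m l}

theorem NoReturningBreak.exists_pos_lt_abs (hret : NoReturningBreak p) (N : ℕ) :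
    ∃ ε > 0, ∀ k j, ∀ v : List (Fin m), v.length < N →
      2 * ε < |compFam (paramFun m l p) (v ++ [k]) (p.1 k j) - p.1 k j| := by
  have hev : ∀ᶠ ε : ℝ in 𝓝[>] 0, ∀ k j, ∀ v ∈ {v : List (Fin m) | v.length < N},
      2 * ε < |compFam (paramFun m l p) (v ++ [k]) (p.1 k j) - p.1 k j| := by
    refine eventually_all.2 fun k => eventually_all.2 fun j =>
      (eventually_all_finite (List.finite_length_lt (Fin m) N)).2 fun v _ => ?_
    have hpos := abs_pos.2 (sub_ne_zero.2 (hret k j v))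
    filter_upwards [Ioo_mem_nhdsGT (half_pos hpos)] with ε hε
    linarith [hε.2]
  obtain ⟨ε, hε, hfar⟩ := (eventually_mem_nhdsWithin.and hev).exists
  exact ⟨ε, hε, hfar⟩

/-- The words `u` for which the slope of the last map applied is not controlled under perturbation
of `p`: either the orbit of `0` coded by `u` comes within `ε` of a breaking point of that map, or
`u` is so short that the orbits of nearby systems need not be close yet. -/
def IsBadWord (p : Param m l) (ε : ℝ) (N : ℕ) (u : List (Fin m)) : Prop :=
  (∃ i : Σ k, Fin (l k), IsNearVisit (paramFun m l p) 0 i.1 (p.1 i.1 i.2) ε u) ∨ u.length ≤ N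

theorem NoReturningBreak.exists_suffixCount_isBadWord_le (hret : NoReturningBreak p)
    (hp : ∀ k, LipschitzWith 1 (paramFun m l p k)) {α : ℝ} (hα : 0 < α) :
    ∃ ε > 0, ∀ N₀ w, (suffixCount (IsBadWord p ε N₀) w : ℝ) ≤
      α * w.length + (Fintype.card (Σ k, Fin (l k)) + N₀ + 1 : ℕ) := by
  set L := Fintype.card (Σ k, Fin (l k))
  obtain ⟨N, hN⟩ := exists_nat_gt (L / α)
  have hN0 : (0 : ℝ) < N := (div_nonneg L.cast_nonneg hα.le).trans_lt hN
  obtain ⟨ε, hε, hfar⟩ := hret.exists_pos_lt_abs N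
  refine ⟨ε, hε, fun N₀ w => ?_⟩
  set near : (Σ k, Fin (l k)) → List (Fin m) → Prop := fun i =>
    IsNearVisit (paramFun m l p) 0 i.1 (p.1 i.1 i.2) ε
  have hone : ∀ i, (suffixCount (near i) w : ℝ) ≤ w.length / N + 1 := fun i => by
    have hsep : suffixCount (near i) w * N ≤ w.length + N :=
      suffixCount_mul_le (fun v u hv hu hvu => hu.le_length_of_append hp (hfar i.1 i.2) hv hvu) w
    rw [div_add_one hN0.ne', le_div_iff₀ hN0]
    exact_mod_cast hsep
  have hnear : (suffixCount (fun u => ∃ i, near i u) w : ℝ) ≤ L * (w.length / N + 1) :=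
    calc (suffixCount (fun u => ∃ i, near i u) w : ℝ) ≤ ∑ i, (suffixCount (near i) w : ℝ) := by
          exact_mod_cast suffixCount_exists_le near w
      _ ≤ ∑ _ : Σ k, Fin (l k), ((w.length : ℝ) / N + 1) := Finset.sum_le_sum fun i _ => hone i
      _ = L * (w.length / N + 1) := by
          rw [Finset.sum_const, Finset.card_univ, nsmul_eq_mul]
  have hdensity : L * (w.length / N : ℝ) ≤ α * w.length := by
    rw [mul_div_left_comm, mul_comm]
    exact mul_le_mul_of_nonneg_right ((div_lt_comm₀ hα hN0).1 hN).le (Nat.cast_nonneg _)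
  have hsplit : suffixCount (IsBadWord p ε N₀) w ≤
      suffixCount (fun u => ∃ i, near i u) w + (N₀ + 1) :=
    (suffixCount_or_le _ _ w).trans (Nat.add_le_add_left (suffixCount_length_le N₀ w) _)
  have hsplit' : (suffixCount (IsBadWord p ε N₀) w : ℝ) ≤
      suffixCount (fun u => ∃ i, near i u) w + (N₀ + 1) := by exact_mod_cast hsplit
  push_cast
  linarith

end RareVisits

section CylinderComparison

variable {p q : Param m l} {r T ε η : ℝ} {K : ℝ≥0}

theorem contractingWith_paramFun (hK : K < 1) (hq : q ∈ boundedParams m l r K T) (k : Fin m) :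
    ContractingWith K (paramFun m l q k) :=
  ⟨hK, lipschitzWith_paramFun hq k⟩

theorem slopeIdx_eq_of_abs_sub_le {n : ℕ} {b b' : Fin n → ℝ} {x u : ℝ}
    (hb : ∀ j, |b' j - b j| ≤ η) (hu : |u - x| ≤ η) (hfar : ∀ j, 2 * η < |x - b j|) :
    slopeIdx b' u = slopeIdx b x := by
  refine slopeIdx_congr fun j => ?_
  obtain ⟨hb₁, hb₂⟩ := abs_le.1 (hb j)
  obtain ⟨hu₁, hu₂⟩ := abs_le.1 hu
  rcases lt_abs.1 (hfar j) with h | h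
  · exact iff_of_true (by linarith) (by linarith)
  · exact iff_of_false (by linarith) (by linarith)

theorem log_cylLen_paramFun_cons [NeZero m] (hq : ∀ k, ContractingWith K (paramFun m l q k))
    {k : Fin m} {i : Fin (l k + 1)} (hi : q.2.2 k i ≠ 0) {w : List (Fin m)}
    (hw : 0 < cylLen (paramFun m l q) w)
    (hidx : ∀ x ∈ suppInt (paramFun m l q),
      slopeIdx (q.1 k) (compFam (paramFun m l q) w x) = i) :
    Real.log (cylLen (paramFun m l q) (k :: w)) =
      Real.log |q.2.2 k i| + Real.log (cylLen (paramFun m l q) w) := by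
  obtain ⟨a, b, hab, hI⟩ := exists_cylinder_eq_Icc hq w
  have hidx' : ∀ u ∈ Icc a b, slopeIdx (q.1 k) u = i := by
    rw [← hI]
    exact forall_mem_image.2 hidx
  have hcons : cylLen (paramFun m l q) (k :: w) = |q.2.2 k i| * cylLen (paramFun m l q) w := by
    rw [cylLen, cylLen, compFam_image_cons, hI, Real.diam_Icc hab]
    exact diam_plFun_image_Icc hab hidx'
  rw [hcons, Real.log_mul (abs_ne_zero.2 hi) hw.ne']

theorem eventually_abs_log_slope_sub_le (hρ : ∀ k i, p.2.2 k i ≠ 0) (hε : 0 < ε) :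
    ∀ᶠ q : Param m l in 𝓝 p, ∀ k i, |Real.log (|q.2.2 k i|) - Real.log (|p.2.2 k i|)| ≤ ε := by
  refine eventually_all.2 fun k => eventually_all.2 fun i => ?_
  have hcont : ContinuousAt (fun q : Param m l => Real.log |q.2.2 k i|) p :=
    ContinuousAt.log (by fun_prop) (abs_ne_zero.2 (hρ k i))
  exact (Metric.tendsto_nhds.1 hcont ε hε).mono fun q hq => hq.le

theorem eventually_abs_breaks_sub_le (p : Param m l) (hη : 0 < η) :
    ∀ᶠ q : Param m l in 𝓝 p, ∀ k j, |q.1 k j - p.1 k j| ≤ η := by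
  refine eventually_all.2 fun k => eventually_all.2 fun j => ?_
  have hcont : ContinuousAt (fun q : Param m l => q.1 k j) p := by fun_prop
  exact (Metric.tendsto_nhds.1 hcont η hη).mono fun q hq => hq.le

/-- Away from the breaking points, the last maps applied by `p` and by a nearby `q` have almost the
same slope on the whole cylinder. -/
theorem exists_eventually_abs_log_cylLen_cons_sub_le [NeZero m] (hr : 0 < r) (hK : K < 1)
    (hp : boundedParams m l r K T ∈ 𝓝 p) (hη : 0 < η) (hε : 0 < ε) :
    ∃ N, ∀ᶠ q in 𝓝 p, ∀ k, ∀ w : List (Fin m), N ≤ w.length →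
      (∀ j, 2 * η < |compFam (paramFun m l p) w 0 - p.1 k j|) →
      |(Real.log (cylLen (paramFun m l q) (k :: w)) - Real.log (cylLen (paramFun m l p) (k :: w)))
        - (Real.log (cylLen (paramFun m l q) w) - Real.log (cylLen (paramFun m l p) w))| ≤ ε := by
  obtain ⟨N, hshadow⟩ := exists_eventually_abs_compFam_paramFun_sub_le hK hp hη
  have hslope : ∀ {q}, q ∈ boundedParams m l r K T → ∀ k i, q.2.2 k i ≠ 0 := fun hq k i =>
    abs_pos.1 (hr.trans_le (hq.1 k i).1)
  have hcons : ∀ᶠ q in 𝓝 p, ∀ k, ∀ w : List (Fin m), N ≤ w.length →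
      (∀ j, 2 * η < |compFam (paramFun m l p) w 0 - p.1 k j|) →
      Real.log (cylLen (paramFun m l q) (k :: w)) =
        Real.log |q.2.2 k (slopeIdx (p.1 k) (compFam (paramFun m l p) w 0))| +
          Real.log (cylLen (paramFun m l q) w) := by
    filter_upwards [hp, hshadow, eventually_abs_breaks_sub_le p hη] with q hq hqw hqb k w hw hfar
    have hcontr := contractingWith_paramFun hK hq
    exact log_cylLen_paramFun_cons hcontr (hslope hq k _)
      (cylLen_pos hcontr (intervalLowerBound_paramFun hr.le hq) (by positivity) w)
      fun x hx => slopeIdx_eq_of_abs_sub_le (hqb k) (hqw w hw x hx) hfar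
  refine ⟨N, ?_⟩
  filter_upwards [hcons, eventually_abs_log_slope_sub_le (hslope (mem_of_mem_nhds hp)) hε]
    with q hq hlog k w hw hfar
  rw [hq k w hw hfar, hcons.self_of_nhds k w hw hfar, add_sub_add_comm, add_sub_cancel_right]
  exact hlog k _

theorem abs_log_cylLen_paramFun_cons_sub_le [NeZero m] (hr : 0 < r) (hK : K < 1)
    (hp : p ∈ boundedParams m l r K T) (hq : q ∈ boundedParams m l r K T) (k : Fin m)
    (w : List (Fin m)) :
    |(Real.log (cylLen (paramFun m l q) (k :: w)) - Real.log (cylLen (paramFun m l p) (k :: w)))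
      - (Real.log (cylLen (paramFun m l q) w) - Real.log (cylLen (paramFun m l p) w))|
      ≤ 2 * -Real.log (r / (∑ k, l k + 1 : ℕ)) := by
  have hstep : ∀ {q}, q ∈ boundedParams m l r K T → |Real.log (cylLen (paramFun m l q) (k :: w)) -
      Real.log (cylLen (paramFun m l q) w)| ≤ -Real.log (r / (∑ k, l k + 1 : ℕ)) := fun hq =>
    abs_log_cylLen_cons_sub_le (contractingWith_paramFun hK hq)
      (intervalLowerBound_paramFun hr.le hq) (by positivity) k w
  rw [sub_sub_sub_comm, two_mul]
  exact (abs_sub _ _).trans (add_le_add (hstep hq) (hstep hp))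

theorem NoReturningBreak.eventually_abs_log_cylLen_sub_le [NeZero m] (hret : NoReturningBreak p)
    (hρ : ∀ k i, p.2.2 k i ≠ 0 ∧ |p.2.2 k i| < 1) (hε : 0 < ε) :
    ∀ᶠ q in 𝓝 p, ∃ A, ∀ w, |Real.log (cylLen (paramFun m l q) w) -
      Real.log (cylLen (paramFun m l p) w)| ≤ A + ε * w.length := by
  obtain ⟨r, hr, K, hK, T, hp⟩ := exists_boundedParams_mem_nhds hρ
  have hp' := mem_of_mem_nhds hp
  have hcrude := fun {q} => abs_log_cylLen_paramFun_cons_sub_le (q := q) hr hK hp'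
  set B : ℝ := 2 * -Real.log (r / (∑ k, l k + 1 : ℕ))
  have hB : 0 ≤ B := (abs_nonneg _).trans (hcrude hp' 0 [])
  obtain ⟨η, hη, hcount⟩ := hret.exists_suffixCount_isBadWord_le
    (fun k => (lipschitzWith_paramFun hp' k).weaken hK.le) (α := ε / 2 / (B + 1)) (by positivity)
  obtain ⟨N, hgood⟩ :=
    exists_eventually_abs_log_cylLen_cons_sub_le hr hK hp (half_pos hη) (half_pos hε)
  filter_upwards [hp, hgood] with q hq hqgood
  set R : List (Fin m) → ℝ := fun w =>
    Real.log (cylLen (paramFun m l q) w) - Real.log (cylLen (paramFun m l p) w)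
  have hnotBad : ∀ k w, ¬ IsBadWord p η N (k :: w) → |R (k :: w) - R w| ≤ ε / 2 := by
    intro k w hbad
    obtain ⟨hfar, hlen⟩ := not_or.1 hbad
    refine hqgood k w (Nat.le_of_lt_succ (not_le.1 hlen)) fun j => ?_
    rw [mul_div_cancel₀ η two_ne_zero]
    exact not_le.1 fun hj => hfar ⟨⟨k, j⟩, w, rfl, hj⟩
  have hrate : ε / 2 + B * (ε / 2 / (B + 1)) ≤ ε := by
    have hratio : B / (B + 1) ≤ 1 := (div_le_one (by positivity)).2 (by linarith)
    rw [mul_div_left_comm]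
    linarith [mul_le_of_le_one_right (half_pos hε).le hratio]
  exact ⟨_, fun w => (abs_le_of_suffixCount_le (half_pos hε).le hB hnotBad (hcrude hq)
    (hcount N) w).trans
      (add_le_add_right (mul_le_mul_of_nonneg_right hrate (Nat.cast_nonneg _)) _)⟩

end CylinderComparison

theorem limsup_le_limsup_add_of_tendsto {ι : Type*} {F : Filter ι} [F.NeBot] {u v w : ι → ℝ}
    {b : ℝ} (hu : F.IsBoundedUnder (· ≥ ·) u) (hv : F.IsBoundedUnder (· ≤ ·) v)
    (hv' : F.IsBoundedUnder (· ≥ ·) v) (hw : Tendsto w F (𝓝 b))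
    (h : ∀ᶠ i in F, u i ≤ v i + w i) : limsup u F ≤ limsup v F + b :=
  calc limsup u F ≤ limsup (v + w) F :=
        limsup_le_limsup h hu.isCoboundedUnder_le (isBoundedUnder_le_add hv hw.isBoundedUnder_le)
    _ ≤ limsup v F + limsup w F :=
        limsup_add_le hv' hv hw.isCoboundedUnder_le hw.isBoundedUnder_le
    _ = limsup v F + b := by rw [hw.limsup_eq]

section Pressure

variable {f g : Fin m → ℝ → ℝ} {K : ℝ≥0} {a b c s s' t A ε : ℝ}

/-- The sum `∑ |I_w| ^ s` over the words `w` of length `n`, whose exponential growth rate is the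
pressure. -/
def partitionSum (f : Fin m → ℝ → ℝ) (s : ℝ) (n : ℕ) : ℝ :=
  ∑ w : Fin n → Fin m, cylLen f (List.ofFn w) ^ s

theorem pressure_eq_limsup (f : Fin m → ℝ → ℝ) (s : ℝ) :
    pressure f s = limsup (fun n : ℕ => (n : ℝ)⁻¹ * Real.log (partitionSum f s n)) atTop := rfl

theorem partitionSum_pos [NeZero m] (hf : HasTemperedCylinders f) (s : ℝ) (n : ℕ) :
    0 < partitionSum f s n := by
  obtain ⟨_, hC⟩ := hf
  exact Finset.sum_pos (fun w _ => Real.rpow_pos_of_pos (hC _).1 s) Finset.univ_nonempty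

theorem partitionSum_zero_right (f : Fin m → ℝ → ℝ) (n : ℕ) : partitionSum f 0 n = m ^ n := by
  simp [partitionSum]

theorem log_partitionSum_le [NeZero m] (hf : HasTemperedCylinders f) (hg : HasTemperedCylinders g)
    (h : ∀ w, s * Real.log (cylLen f w) ≤ s' * Real.log (cylLen g w) + (a + b * w.length))
    (n : ℕ) :
    Real.log (partitionSum f s n) ≤ Real.log (partitionSum g s' n) + (a + b * n) := by
  have hsum : partitionSum f s n ≤ partitionSum g s' n * Real.exp (a + b * n) := by
    rw [partitionSum, partitionSum, Finset.sum_mul]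
    refine Finset.sum_le_sum fun w _ => ?_
    rw [Real.rpow_def_of_pos (hf.choose_spec _).1, Real.rpow_def_of_pos (hg.choose_spec _).1,
      ← Real.exp_add, Real.exp_le_exp, mul_comm, mul_comm (Real.log (cylLen g _))]
    exact (h _).trans_eq (by rw [List.length_ofFn])
  have hlog := Real.log_le_log (partitionSum_pos hf s n) hsum
  rwa [Real.log_mul (partitionSum_pos hg s' n).ne' (Real.exp_pos _).ne', Real.log_exp] at hlog

theorem HasTemperedCylinders.exists_abs_inv_mul_log_partitionSum_le [NeZero m]
    (hf : HasTemperedCylinders f) (s : ℝ) :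
    ∃ B, ∀ n : ℕ, |(n : ℝ)⁻¹ * Real.log (partitionSum f s n)| ≤ B := by
  obtain ⟨C, hC⟩ := hf
  have hC0 : 0 ≤ C := by simpa using (abs_nonneg _).trans (hC []).2
  have hlen : ∀ w, |s * Real.log (cylLen f w)| ≤ |s| * C + |s| * C * w.length := fun w => by
    rw [abs_mul]
    linarith [mul_le_mul_of_nonneg_left (hC w).2 (abs_nonneg s)]
  have hupp := log_partitionSum_le (s := s) (s' := 0) (a := |s| * C) (b := |s| * C)
    ⟨C, hC⟩ ⟨C, hC⟩ fun w => by
    linarith [(abs_le.1 (hlen w)).2]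
  have hlow := log_partitionSum_le (s := 0) (s' := s) (a := |s| * C) (b := |s| * C)
    ⟨C, hC⟩ ⟨C, hC⟩ fun w => by
    linarith [(abs_le.1 (hlen w)).1]
  simp only [partitionSum_zero_right, Real.log_pow] at hupp hlow
  have hm : 0 ≤ Real.log m := Real.log_natCast_nonneg m
  have hsC : 0 ≤ |s| * C := mul_nonneg (abs_nonneg s) hC0
  refine ⟨Real.log m + 2 * (|s| * C), fun n => ?_⟩
  rcases Nat.eq_zero_or_pos n with rfl | hn
  · simpa using add_nonneg hm (mul_nonneg zero_le_two hsC)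
  have hn1 : (1 : ℝ) ≤ n := Nat.one_le_cast.2 hn
  have hsCn : |s| * C ≤ |s| * C * n := le_mul_of_one_le_right hsC hn1
  have hmn : 0 ≤ n * Real.log m := mul_nonneg n.cast_nonneg hm
  rw [abs_mul, abs_of_nonneg (inv_nonneg.2 n.cast_nonneg), inv_mul_le_iff₀ (by linarith), abs_le]
  constructor <;> linarith [hupp n, hlow n]

theorem pressure_le_pressure_add [NeZero m] (hf : HasTemperedCylinders f)
    (hg : HasTemperedCylinders g)
    (h : ∀ w, s * Real.log (cylLen f w) ≤ s' * Real.log (cylLen g w) + (a + b * w.length)) :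
    pressure f s ≤ pressure g s' + b := by
  obtain ⟨B, hB⟩ := hf.exists_abs_inv_mul_log_partitionSum_le s
  obtain ⟨B', hB'⟩ := hg.exists_abs_inv_mul_log_partitionSum_le s'
  have hlim : Tendsto (fun n : ℕ => a * (n : ℝ)⁻¹ + b) atTop (𝓝 (a * 0 + b)) :=
    (tendsto_inv_atTop_nhds_zero_nat.const_mul a).add_const b
  rw [mul_zero, zero_add] at hlim
  rw [pressure_eq_limsup, pressure_eq_limsup]
  refine limsup_le_limsup_add_of_tendsto
    (isBoundedUnder_of ⟨-B, fun n => (abs_le.1 (hB n)).1⟩)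
    (isBoundedUnder_of ⟨B', fun n => (abs_le.1 (hB' n)).2⟩)
    (isBoundedUnder_of ⟨-B', fun n => (abs_le.1 (hB' n)).1⟩) hlim ?_
  filter_upwards [eventually_ne_atTop 0] with n hn
  have hn' : (n : ℝ) ≠ 0 := Nat.cast_ne_zero.2 hn
  calc (n : ℝ)⁻¹ * Real.log (partitionSum f s n)
      ≤ (n : ℝ)⁻¹ * (Real.log (partitionSum g s' n) + (a + b * n)) :=
        mul_le_mul_of_nonneg_left (log_partitionSum_le hf hg h n) (by positivity)
    _ = (n : ℝ)⁻¹ * Real.log (partitionSum g s' n) + (a * (n : ℝ)⁻¹ + b) := by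
        field_simp

theorem abs_pressure_sub_le [NeZero m] (hf : HasTemperedCylinders f)
    (hg : HasTemperedCylinders g)
    (h : ∀ w, |Real.log (cylLen g w) - Real.log (cylLen f w)| ≤ A + ε * w.length) (s : ℝ) :
    |pressure g s - pressure f s| ≤ |s| * ε := by
  have hs : ∀ w, |s * Real.log (cylLen g w) - s * Real.log (cylLen f w)| ≤
      |s| * A + |s| * ε * w.length := fun w => by
    rw [← mul_sub, abs_mul, mul_assoc, ← mul_add]
    exact mul_le_mul_of_nonneg_left (h w) (abs_nonneg s)
  rw [abs_sub_le_iff, sub_le_iff_le_add', sub_le_iff_le_add']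
  exact ⟨pressure_le_pressure_add hg hf fun w => sub_le_iff_le_add'.1 (abs_sub_le_iff.1 (hs w)).1,
    pressure_le_pressure_add hf hg fun w => sub_le_iff_le_add'.1 (abs_sub_le_iff.1 (hs w)).2⟩

theorem pressure_add_le [NeZero m] (hf : ∀ k, ContractingWith K (f k))
    (hc : ∀ k, IntervalLowerBound c (f k)) (hc0 : 0 < c) (s : ℝ) (ht : 0 ≤ t) :
    pressure f (s + t) ≤ pressure f s + t * Real.log K := by
  have htemp := hasTemperedCylinders hf hc hc0
  refine pressure_le_pressure_add (a := t * Real.log (cylLen f [])) htemp htemp fun w => ?_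
  linarith [mul_le_mul_of_nonneg_left (log_cylLen_le hf hc hc0 w) ht]

theorem strictAnti_pressure [NeZero m] (hf : ∀ k, ContractingWith K (f k))
    (hc : ∀ k, IntervalLowerBound c (f k)) (hc0 : 0 < c) : StrictAnti (pressure f) := by
  intro s s' hss'
  have hlogK : Real.log K < 0 :=
    Real.log_neg (lipschitzConst_pos hf hc hc0) (NNReal.coe_lt_one.2 (hf 0).1)
  have hdrop := pressure_add_le hf hc hc0 s (sub_pos.2 hss').le
  rw [add_sub_cancel] at hdrop
  linarith [mul_neg_of_pos_of_neg (sub_pos.2 hss') hlogK]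

theorem exists_pressure_nonpos [NeZero m] (hf : ∀ k, ContractingWith K (f k))
    (hc : ∀ k, IntervalLowerBound c (f k)) (hc0 : 0 < c) : ∃ s, 0 ≤ s ∧ pressure f s ≤ 0 := by
  have hlogK : Real.log K < 0 :=
    Real.log_neg (lipschitzConst_pos hf hc hc0) (NNReal.coe_lt_one.2 (hf 0).1)
  have ht : 0 ≤ |pressure f 0| / -Real.log K := div_nonneg (abs_nonneg _) (neg_pos.2 hlogK).le
  have hdrop := pressure_add_le hf hc hc0 0 ht
  rw [zero_add, div_neg, neg_mul, div_mul_cancel₀ _ hlogK.ne, ← div_neg] at hdrop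
  exact ⟨_, ht, hdrop.trans (by linarith [le_abs_self (pressure f 0)])⟩

end Pressure

theorem tendsto_sInf_nonpos {ι : Type*} {F : Filter ι} {Ψ : ι → ℝ → ℝ} {Φ : ℝ → ℝ}
    (hΨ : ∀ᶠ i in F, AntitoneOn (Ψ i) (Ici 0)) (hΦ : StrictAntiOn Φ (Ici 0))
    (hzero : ∃ s, 0 ≤ s ∧ Φ s ≤ 0) (hlim : ∀ s, 0 ≤ s → Tendsto (fun i => Ψ i s) F (𝓝 (Φ s))) :
    Tendsto (fun i => sInf {s | 0 ≤ s ∧ Ψ i s ≤ 0}) F (𝓝 (sInf {s | 0 ≤ s ∧ Φ s ≤ 0})) := by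
  have hbdd : ∀ Θ : ℝ → ℝ, BddBelow {s | 0 ≤ s ∧ Θ s ≤ 0} := fun _ => ⟨0, fun _ hs => hs.1⟩
  have habove : ∀ z, sInf {s | 0 ≤ s ∧ Φ s ≤ 0} < z → ∀ᶠ i in F, 0 ≤ z ∧ Ψ i z ≤ 0 := by
    intro z hz
    obtain ⟨s, ⟨hs0, hs⟩, hsz⟩ := exists_lt_of_csInf_lt hzero hz
    have hz0 : 0 ≤ z := hs0.trans hsz.le
    have hneg : Φ z < 0 := (hΦ hs0 hz0 hsz).trans_le hs
    exact ((hlim z hz0).eventually_lt_const hneg).mono fun i hi => ⟨hz0, hi.le⟩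
  refine tendsto_order.2 ⟨fun z hz => ?_, fun z hz => ?_⟩
  · obtain ⟨z', hzz', hz'⟩ := exists_between hz
    rcases lt_or_ge z' 0 with hneg | hz'0
    · exact Eventually.of_forall fun i =>
        (hzz'.trans hneg).trans_le (Real.sInf_nonneg fun s hs => hs.1)
    have hpos : 0 < Φ z' := by
      by_contra! hle
      exact (csInf_le (hbdd Φ) ⟨hz'0, hle⟩).not_gt hz'
    filter_upwards [hΨ, (hlim z' hz'0).eventually_const_lt hpos, habove _ (lt_add_one _)]
      with i hanti hi hne
    refine hzz'.trans_le (le_csInf ⟨_, hne⟩ fun s hs => ?_)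
    by_contra! hsz'
    exact (hi.trans_le (hanti hs.1 hz'0 hsz'.le)).not_ge hs.2
  · obtain ⟨z', hz', hz'z⟩ := exists_between hz
    filter_upwards [habove z' hz'] with i hi
    exact (csInf_le (hbdd (Ψ i)) hi).trans_lt hz'z

section NaturalDimension

variable {p : Param m l}

theorem NoReturningBreak.continuousAt_pressure [NeZero m] (hret : NoReturningBreak p)
    (hρ : ∀ k i, p.2.2 k i ≠ 0 ∧ |p.2.2 k i| < 1) (s : ℝ) :
    ContinuousAt (fun q => pressure (paramFun m l q) s) p := by
  obtain ⟨r, hr, K, hK, T, hp⟩ := exists_boundedParams_mem_nhds hρ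
  have htemp : ∀ {q}, q ∈ boundedParams m l r K T → HasTemperedCylinders (paramFun m l q) :=
    fun hq => hasTemperedCylinders (contractingWith_paramFun hK hq)
      (intervalLowerBound_paramFun hr.le hq) (by positivity)
  refine Metric.tendsto_nhds.2 fun ε hε => ?_
  have hε' : 0 < ε / (|s| + 1) := by positivity
  filter_upwards [hp, hret.eventually_abs_log_cylLen_sub_le hρ hε'] with q hq ⟨A, hA⟩
  calc |pressure (paramFun m l q) s - pressure (paramFun m l p) s|
      ≤ |s| * (ε / (|s| + 1)) := abs_pressure_sub_le (htemp (mem_of_mem_nhds hp)) (htemp hq) hA s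
    _ < (|s| + 1) * (ε / (|s| + 1)) := mul_lt_mul_of_pos_right (lt_add_one _) hε'
    _ = ε := mul_div_cancel₀ _ (by positivity)

theorem natDim_continuousWithinAt_general [NeZero m]
    (hρ : ∀ k i, p.2.2 k i ≠ 0 ∧ |p.2.2 k i| < 1) (hret : NoReturningBreak p) :
    ContinuousAt (natDim m l) p := by
  obtain ⟨r, hr, K, hK, T, hp⟩ := exists_boundedParams_mem_nhds hρ
  have hp' := mem_of_mem_nhds hp
  have hc : 0 < r / (∑ k, l k + 1 : ℕ) := by positivity
  have hanti : ∀ q ∈ boundedParams m l r K T, StrictAnti (pressure (paramFun m l q)) :=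
    fun q hq => strictAnti_pressure (contractingWith_paramFun hK hq)
      (intervalLowerBound_paramFun hr.le hq) hc
  exact tendsto_sInf_nonpos (mem_of_superset hp fun q hq => (hanti q hq).antitone.antitoneOn _)
    ((hanti p hp').strictAntiOn _)
    (exists_pressure_nonpos (contractingWith_paramFun hK hp')
      (intervalLowerBound_paramFun hr.le hp') hc)
    fun s _ => hret.continuousAt_pressure hρ s

end NaturalDimension

end

/-- Fix a type `ℓ`.  Let `(b, τ, ρ) ∈ Γ^ℓ` be a parameter vector such that
the self-similar IFS generated by `F^{(b,τ,ρ)}` (the family of affine maps coinciding with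
the maps of `F^{(b,τ,ρ)}` on their intervals of linearity) has no exact overlapping.  Then
the map assigning to each parameter vector in `Γ^ℓ` the natural dimension of the
corresponding CPLIFS is continuous at `(b, τ, ρ)`. -/
theorem natDim_continuousWithinAt
    {m : ℕ} {l : Fin m → ℕ} (hm : 2 ≤ m)
    (p : Param m l) (hp : p ∈ Gamma m l)
    (hno : ∃ t : (k : Fin m) → Fin (l k + 1) → ℝ,
      (∀ (k : Fin m) (i : Fin (l k + 1)) (x : ℝ),
        (∀ j : Fin (l k), (j : ℕ) < (i : ℕ) → p.1 k j < x) →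
        (∀ j : Fin (l k), (i : ℕ) ≤ (j : ℕ) → x < p.1 k j) →
        paramFun m l p k x = p.2.2 k i * x + t k i) ∧
      NoExactOverlap (fun q : Σ k : Fin m, Fin (l k + 1) =>
        fun x => p.2.2 q.1 q.2 * x + t q.1 q.2)) :
    ContinuousWithinAt (natDim m l) (Gamma m l) p := by
  have : NeZero m := ⟨by omega⟩
  obtain ⟨t, ht, hov⟩ := hno
  have hret : NoReturningBreak p := IsBranchIntercept.noReturningBreak ht hp.1 hov
  exact (natDim_continuousWithinAt_general hp.2.1 hret).continuousWithinAt

end
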